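/- The following hold: (i) Σ_{i=0}^d a_i(W) = Σ_{i=0}^d θ_{t+i}; (ii) Σ_{i=0}^d a*_i(W) = Σ_{i=0}^d θ*_{r+i}; (iii) a_i(W) and a*_i(W) are real for 0 ≤ i ≤ d; (iv) x_i(W) is real and x_i(W) > 0 for 1 ≤ i ≤ d; (v) x*_i(W) is real and x*_i(W) > 0 for 1 ≤ i ≤ d. -/

import Mathlib

open Matrix
open scoped Classical

noncomputable section

/-- The full setup: a `Q`-polynomial distance-regular graph `Γ = (X,R)` of diameter `D ≥ 3`,
with adjacency matrix `A`, primitive idempotents `E_i`, eigenvalues `θ_i`,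
Krein parameters `q^h_{ij}`, a fixed base vertex `x`, dual primitive idempotents `E*_i`,
dual adjacency matrix `A*` and dual eigenvalues `θ*_i`. -/
structure TSetup (X : Type*) [Fintype X] [DecidableEq X] where
  G : SimpleGraph X
  hGconn : G.Connected
  D : ℕ
  hD3 : 3 ≤ D
  hDiamLe : ∀ y z : X, G.dist y z ≤ D
  hDiamEq : ∃ y z : X, G.dist y z = D
  p : ℕ → ℕ → ℕ → ℕ
  hDRG : ∀ h i j : ℕ, h ≤ D → i ≤ D → j ≤ D → ∀ y z : X, G.dist y z = h →
    Nat.card {w : X // G.dist y w = i ∧ G.dist z w = j} = p h i j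
  A : Matrix X X ℂ
  hA : ∀ y z : X, A y z = if G.Adj y z then 1 else 0
  E : ℕ → Matrix X X ℂ
  hEzero : ∀ i : ℕ, D < i → E i = 0
  hEsum : ∑ i ∈ Finset.range (D + 1), E i = 1
  hEidem : ∀ i j : ℕ, i ≤ D → j ≤ D → E i * E j = if i = j then E i else 0
  hEsymm : ∀ i : ℕ, (E i)ᵀ = E i
  hEreal : ∀ i : ℕ, (E i).map (starRingEnd ℂ) = E i
  hE0 : E 0 = (Fintype.card X : ℂ)⁻¹ • Matrix.of (fun _ _ => (1 : ℂ))
  θ : ℕ → ℝ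
  hθinj : ∀ i j : ℕ, i ≤ D → j ≤ D → θ i = θ j → i = j
  hAspec : A = ∑ i ∈ Finset.range (D + 1), (θ i : ℂ) • E i
  q : ℕ → ℕ → ℕ → ℝ
  hKrein : ∀ i j : ℕ, i ≤ D → j ≤ D →
    Matrix.hadamard (E i) (E j) =
      (Fintype.card X : ℂ)⁻¹ • ∑ h ∈ Finset.range (D + 1), (q h i j : ℂ) • E h
  hQpoly0 : ∀ h i j : ℕ, h ≤ D → i ≤ D → j ≤ D →
    (i + j < h ∨ h + j < i ∨ h + i < j) → q h i j = 0
  hQpoly1 : ∀ h i j : ℕ, h ≤ D → i ≤ D → j ≤ D →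
    (h = i + j ∨ i = h + j ∨ j = h + i) → q h i j ≠ 0
  x : X
  Estar : ℕ → Matrix X X ℂ
  hEstarzero : ∀ i : ℕ, D < i → Estar i = 0
  hEstar : ∀ i : ℕ, i ≤ D → ∀ y z : X,
    Estar i y z = if y = z ∧ G.dist x y = i then 1 else 0
  Astar : Matrix X X ℂ
  hAstar : ∀ y z : X, Astar y z = if y = z then (Fintype.card X : ℂ) * E 1 x y else 0
  θstar : ℕ → ℝ
  hθstarinj : ∀ i j : ℕ, i ≤ D → j ≤ D → θstar i = θstar j → i = j
  hAstarspec : Astar = ∑ i ∈ Finset.range (D + 1), (θstar i : ℂ) • Estar i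

variable {X : Type*} [Fintype X] [DecidableEq X]

/-- The Terwilliger algebra `T = T(x)`, generated by `A` and `A*`. -/
def TSetup.T (S : TSetup X) : Subalgebra ℂ (Matrix X X ℂ) :=
  Algebra.adjoin ℂ {S.A, S.Astar}

/-- A thin irreducible `T`-module `W` with endpoint `r`, dual endpoint `t` and diameter `d`,
where `E*_i W ≠ 0` iff `r ≤ i ≤ r + d` and `E_i W ≠ 0` iff `t ≤ i ≤ t + d`. -/
structure TMod (S : TSetup X) where
  W : Submodule ℂ (X → ℂ)
  hWinv : ∀ B ∈ S.T, ∀ w ∈ W, B *ᵥ w ∈ W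
  hWne : W ≠ ⊥
  hWirr : ∀ U : Submodule ℂ (X → ℂ), U ≤ W →
    (∀ B ∈ S.T, ∀ w ∈ U, B *ᵥ w ∈ U) → U = ⊥ ∨ U = W
  hthin : ∀ i : ℕ, Module.finrank ℂ (W.map (S.Estar i).mulVecLin) ≤ 1
  r : ℕ
  t : ℕ
  d : ℕ
  hr : ∀ i : ℕ, W.map (S.Estar i).mulVecLin ≠ ⊥ ↔ r ≤ i ∧ i ≤ r + d
  ht : ∀ i : ℕ, W.map (S.E i).mulVecLin ≠ ⊥ ↔ t ≤ i ∧ i ≤ t + d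

open Classical in
/-- The action of a matrix `B` on `W` (the restriction of `B` to `W`; defined to be `0`
if `B` does not leave `W` invariant). -/
def actW (S : TSetup X) (M : TMod S) (B : Matrix X X ℂ) : M.W →ₗ[ℂ] M.W :=
  if h : ∀ w ∈ M.W, B.mulVecLin w ∈ M.W then B.mulVecLin.restrict h else 0

/-- `tr_W(B)`: the trace of the action of `B` on `W`. -/
def trW (S : TSetup X) (M : TMod S) (B : Matrix X X ℂ) : ℂ :=
  LinearMap.trace ℂ M.W (actW S M B)

/-- `a_i(W) = tr_W(E*_{r+i} A)`. -/
def aW (S : TSetup X) (M : TMod S) (i : ℕ) : ℂ :=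
  trW S M (S.Estar (M.r + i) * S.A)

/-- `x_i(W) = tr_W(E*_{r+i} A E*_{r+i-1} A)`, with `x_0(W) = 0`. -/
def xW (S : TSetup X) (M : TMod S) (i : ℕ) : ℂ :=
  if i = 0 then 0 else trW S M (S.Estar (M.r + i) * S.A * S.Estar (M.r + i - 1) * S.A)

/-- `a*_i(W) = tr_W(E_{t+i} A*)`. -/
def astarW (S : TSetup X) (M : TMod S) (i : ℕ) : ℂ :=
  trW S M (S.E (M.t + i) * S.Astar)

/-- `x*_i(W) = tr_W(E_{t+i} A* E_{t+i-1} A*)`, with `x*_0(W) = 0`. -/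
def xstarW (S : TSetup X) (M : TMod S) (i : ℕ) : ℂ :=
  if i = 0 then 0 else trW S M (S.E (M.t + i) * S.Astar * S.E (M.t + i - 1) * S.Astar)

/-- The polynomials `p_i`: `p_0 = 1`, `p_{-1} = 0`,
`λ p_i = p_{i+1} + a_i(W) p_i + x_i(W) p_{i-1}`. -/
def pW (S : TSetup X) (M : TMod S) : ℕ → Polynomial ℂ
  | 0 => 1
  | 1 => Polynomial.X - Polynomial.C (aW S M 0)
  | (n + 2) =>
      (Polynomial.X - Polynomial.C (aW S M (n + 1))) * pW S M (n + 1)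
        - Polynomial.C (xW S M (n + 1)) * pW S M n

/-- The polynomials `p*_i`: `p*_0 = 1`, `p*_{-1} = 0`,
`λ p*_i = p*_{i+1} + a*_i(W) p*_i + x*_i(W) p*_{i-1}`. -/
def pstarW (S : TSetup X) (M : TMod S) : ℕ → Polynomial ℂ
  | 0 => 1
  | 1 => Polynomial.X - Polynomial.C (astarW S M 0)
  | (n + 2) =>
      (Polynomial.X - Polynomial.C (astarW S M (n + 1))) * pstarW S M (n + 1)
        - Polynomial.C (xstarW S M (n + 1)) * pstarW S M n

/-- The Hermitian inner product `⟨u,v⟩ = Σ_y u_y conj(v_y)` on `ℂ^X`. -/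
def herm (u v : X → ℂ) : ℂ := ∑ y, u y * (starRingEnd ℂ) (v y)

/-- `ν(W)`, the multiplicative inverse of `m_0(W) = tr_W(E_t E*_r)`. -/
def nuW (S : TSetup X) (M : TMod S) : ℂ :=
  (trW S M (S.E M.t * S.Estar M.r))⁻¹

/-- `k_i(W) = ν(W) m*_i(W)` where `m*_i(W) = tr_W(E*_{r+i} E_t)`. -/
def kW (S : TSetup X) (M : TMod S) (i : ℕ) : ℂ :=
  nuW S M * trW S M (S.Estar (M.r + i) * S.E M.t)

/-- `k*_i(W) = ν(W) m_i(W)` where `m_i(W) = tr_W(E_{t+i} E*_r)`. -/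
def kstarW (S : TSetup X) (M : TMod S) (i : ℕ) : ℂ :=
  nuW S M * trW S M (S.E (M.t + i) * S.Estar M.r)

/-!
Orthogonality of the `E_i` and `E*_i` and thinness make `W` a Hermitian space of dimension `d + 1`
with two orthogonal decompositions into lines. The action of `A` is self-adjoint, with the lines
`E_{t+i}W` as eigenspaces, and is tridiagonal with respect to the lines `E*_{r+i}W`; the same holds
for `A*` with the two decompositions exchanged, tridiagonality now being the vanishing of `q^1_{ij}`
for `|i - j| > 1`. Hence `∑ a_i(W) = tr_W(A) = ∑ θ_{t+i}`. The number `a_i(W)` is the trace of a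
product of two self-adjoint operators, so it equals its own conjugate. Finally
`x_i(W) = tr_W(F F†)` for `F = E*_{r+i} A E*_{r+i-1}`, which is a positive real as soon as `F ≠ 0`;
and `F = 0` would make `E*_r W + ⋯ + E*_{r+i-1} W` a proper nonzero submodule of `W`.
-/

section OrthogonalIdempotents

variable {ι R A : Type*} [CommSemiring R] [Semiring A] [Algebra R A] {e : ι → A} {s : Finset ι}

theorem eq_zero_of_sum_eq_one_of_notMem (he : OrthogonalIdempotents e)
    (hs : ∑ i ∈ s, e i = 1) {i : ι} (hi : i ∉ s) : e i = 0 := by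
  simpa only [hs, mul_one] using he.mul_sum_of_notMem hi

theorem sum_smul_mul (he : OrthogonalIdempotents e) (c : ι → R) {i : ι} (hi : i ∈ s) :
    (∑ j ∈ s, c j • e j) * e i = c i • e i := by
  simp only [Finset.sum_mul, smul_mul_assoc, he.mul_eq, smul_ite, smul_zero,
    Finset.sum_ite_eq', if_pos hi]

theorem sum_smul_mul_sum_smul (he : OrthogonalIdempotents e) (c c' : ι → R) :
    (∑ i ∈ s, c i • e i) * ∑ i ∈ s, c' i • e i = ∑ i ∈ s, (c i * c' i) • e i := by
  rw [Finset.mul_sum]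
  refine Finset.sum_congr rfl fun i hi => ?_
  rw [mul_smul_comm, sum_smul_mul he c hi, smul_smul, mul_comm]

theorem aeval_sum_smul (he : OrthogonalIdempotents e) (hs : ∑ i ∈ s, e i = 1) (c : ι → R)
    (p : Polynomial R) :
    Polynomial.aeval (∑ i ∈ s, c i • e i) p = ∑ i ∈ s, p.eval (c i) • e i := by
  induction p using Polynomial.induction_on with
  | C a => simp only [Polynomial.aeval_C, Polynomial.eval_C, ← Finset.smul_sum, hs,
      Algebra.algebraMap_eq_smul_one]
  | add p q hp hq => simp only [map_add, hp, hq, Polynomial.eval_add, add_smul,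
      Finset.sum_add_distrib]
  | monomial n a ih =>
    rw [pow_succ, ← mul_assoc, map_mul, ih, Polynomial.aeval_X, sum_smul_mul_sum_smul he]
    simp only [Polynomial.eval_mul, Polynomial.eval_X]

theorem mem_adjoin_sum_smul {K A : Type*} [Field K] [Ring A] [Algebra K A] {e : ι → A}
    (he : OrthogonalIdempotents e) (hs : ∑ i ∈ s, e i = 1) {c : ι → K}
    (hc : Set.InjOn c s) (i : ι) :
    e i ∈ Algebra.adjoin K {∑ j ∈ s, c j • e j} := by
  by_cases hi : i ∈ s
  · have hbasis : Polynomial.aeval (∑ j ∈ s, c j • e j) (Lagrange.basis s c i) = e i := by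
      rw [aeval_sum_smul he hs, Finset.sum_eq_single_of_mem i hi, Lagrange.eval_basis_self hc hi,
        one_smul]
      intro j hj hji
      rw [Lagrange.eval_basis_of_ne hji.symm hj, zero_smul]
    exact hbasis ▸ Polynomial.aeval_mem_adjoin_singleton K _
  · exact eq_zero_of_sum_eq_one_of_notMem he hs hi ▸ zero_mem _

end OrthogonalIdempotents

theorem sum_eq_sum_fin_add {A : Type*} [AddCommMonoid A] {s : Finset ℕ} {g : ℕ → A} {r d : ℕ}
    (hs : ∀ j ∉ s, g j = 0) (hg : ∀ j, ¬(r ≤ j ∧ j ≤ r + d) → g j = 0) :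
    ∑ j ∈ s, g j = ∑ i : Fin (d + 1), g (r + i) := by
  calc ∑ j ∈ s, g j = ∑ j ∈ Finset.Ico r (r + (d + 1)), g j :=
        Finset.sum_congr_of_eq_on_inter (fun j _ hj => hg j (by grind)) (fun j _ hj => hs j hj)
          fun _ _ _ => rfl
    _ = ∑ i : Fin (d + 1), g (r + i) := by
        rw [Finset.sum_Ico_eq_sum_range, Nat.add_sub_cancel_left, Finset.sum_range]

section EndTrace

theorem sum_trace_mul {ι R V : Type*} [Fintype ι] [CommRing R] [AddCommGroup V] [Module R V]
    {e : ι → Module.End R V} (he : CompleteOrthogonalIdempotents e) (B : Module.End R V) :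
    ∑ i, LinearMap.trace R V (e i * B) = LinearMap.trace R V B := by
  rw [← map_sum, ← Finset.sum_mul, he.complete, one_mul]

variable {ι K V : Type*} [Fintype ι] [Field K] [CharZero K] [AddCommGroup V] [Module K V]
  [FiniteDimensional K V] {e : ι → Module.End K V}

theorem sum_finrank_range (he : CompleteOrthogonalIdempotents e) :
    ∑ i, Module.finrank K (e i).range = Module.finrank K V := by
  have htrace : ∑ i, LinearMap.trace K V (e i) = Module.finrank K V := by
    rw [← map_sum, he.complete, LinearMap.trace_one]
  simp only [(LinearMap.IsIdempotentElem.isProj_range _ (he.idem _)).trace] at htrace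
  exact_mod_cast htrace

theorem trace_eq_one_of_card_eq_finrank (he : CompleteOrthogonalIdempotents e)
    (hne : ∀ i, e i ≠ 0) (hcard : Fintype.card ι = Module.finrank K V) (i : ι) :
    LinearMap.trace K V (e i) = 1 := by
  have hpos : ∀ j ∈ Finset.univ, 1 ≤ Module.finrank K (e j).range := fun j _ =>
    Submodule.one_le_finrank_iff.mpr (LinearMap.range_eq_bot.not.mpr (hne j))
  have hsum : ∑ _j : ι, 1 = ∑ j, Module.finrank K (e j).range := by
    rw [sum_finrank_range he, ← hcard, Finset.sum_const, smul_eq_mul, mul_one, Finset.card_univ]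
  rw [(LinearMap.IsIdempotentElem.isProj_range _ (he.idem i)).trace,
    ← (Finset.sum_eq_sum_iff_of_le hpos).mp hsum i (Finset.mem_univ i), Nat.cast_one]

end EndTrace

section Irreducible

variable {ι R V : Type*} [Fintype ι] [Ring R] [AddCommGroup V] [Module R V]
  {e : ι → Module.End R V} {B : Module.End R V}

-- Otherwise the range of `∑ i ∈ s, e i` would be a proper nonzero invariant subspace.
theorem exists_mul_mul_ne_zero (he : CompleteOrthogonalIdempotents e) (hne : ∀ i, e i ≠ 0)
    (hirr : ∀ U : Submodule R V, U ∈ B.invtSubmodule → (∀ i, U ∈ (e i).invtSubmodule) →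
      U = ⊥ ∨ U = ⊤)
    {s : Finset ι} {i₀ j₀ : ι} (hi₀ : i₀ ∈ s) (hj₀ : j₀ ∉ s) :
    ∃ i ∈ s, ∃ j ∉ s, e j * B * e i ≠ 0 := by
  by_contra! hzero
  set f := ∑ i ∈ s, e i with hf
  have hf_idem : IsIdempotentElem f := he.isIdempotentElem_sum
  have hB : f * (B * f) = B * f := by
    have hcompl : (∑ j ∈ sᶜ, e j) * (B * f) = 0 := by
      rw [hf, Finset.mul_sum, Finset.sum_mul_sum]
      refine Finset.sum_eq_zero fun j hj => Finset.sum_eq_zero fun i hi => ?_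
      rw [← mul_assoc, hzero i hi j (Finset.mem_compl.mp hj)]
    rw [← add_zero (f * _), ← hcompl, ← add_mul, Finset.sum_add_sum_compl, he.complete, one_mul]
  have he_mul : ∀ i, f * (e i * f) = e i * f := fun i => by
    by_cases hi : i ∈ s
    · rw [he.mul_sum_of_mem hi, hf, Finset.sum_mul]
      simp only [he.mul_eq, Finset.sum_ite_eq', if_pos hi]
    · rw [he.mul_sum_of_notMem hi, mul_zero]
  rcases hirr f.range (LinearMap.IsIdempotentElem.range_mem_invtSubmodule hf_idem hB) fun i =>
    LinearMap.IsIdempotentElem.range_mem_invtSubmodule hf_idem (he_mul i) with hbot | htop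
  · have hf0 : f = 0 := LinearMap.range_eq_bot.mp hbot
    exact hne i₀ (by rw [← he.mul_sum_of_mem hi₀, ← hf, hf0, mul_zero])
  · have hf1 : f = 1 := LinearMap.ext fun v =>
      (LinearMap.IsIdempotentElem.mem_range_iff hf_idem).mp (htop ▸ Submodule.mem_top)
    exact hne j₀ (by rw [← mul_one (e j₀), ← hf1, hf, he.mul_sum_of_notMem hj₀])

theorem succ_mul_mul_castSucc_ne_zero {d : ℕ} {e : Fin (d + 1) → Module.End R V}
    (he : CompleteOrthogonalIdempotents e) (hne : ∀ i, e i ≠ 0)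
    (hirr : ∀ U : Submodule R V, U ∈ B.invtSubmodule → (∀ i, U ∈ (e i).invtSubmodule) →
      U = ⊥ ∨ U = ⊤)
    (htri : ∀ i j : Fin (d + 1), (j : ℕ) + 1 < i → e i * B * e j = 0) (i : Fin d) :
    e i.succ * B * e i.castSucc ≠ 0 := by
  obtain ⟨k, hk, j, hj, hjk⟩ := exists_mul_mul_ne_zero he hne hirr
    (s := Finset.Iic i.castSucc) (i₀ := i.castSucc) (j₀ := i.succ) (by simp) (by simp)
  have hle : (j : ℕ) ≤ k + 1 := not_lt.mp fun h => hjk (htri j k h)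
  have hk' : k ≤ i.castSucc := Finset.mem_Iic.mp hk
  have hj' : i.castSucc < j := not_le.mp fun h => hj (Finset.mem_Iic.mpr h)
  rw [Fin.le_def, Fin.val_castSucc] at hk'
  rw [Fin.lt_def, Fin.val_castSucc] at hj'
  obtain rfl : k = i.castSucc := Fin.ext (by rw [Fin.val_castSucc]; omega)
  obtain rfl : j = i.succ := Fin.ext (by rw [Fin.val_succ]; omega)
  exact hjk

end Irreducible

section TraceStar

variable {𝕜 V : Type*} [RCLike 𝕜] [NormedAddCommGroup V] [InnerProductSpace 𝕜 V]
  [FiniteDimensional 𝕜 V]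

theorem trace_star (f : Module.End 𝕜 V) :
    LinearMap.trace 𝕜 V (star f) = star (LinearMap.trace 𝕜 V f) := by
  simp only [LinearMap.trace_eq_sum_inner _ (stdOrthonormalBasis 𝕜 V), LinearMap.star_eq_adjoint,
    LinearMap.adjoint_inner_right, star_sum, RCLike.star_def, inner_conj_symm]

theorem star_trace_mul {f g : Module.End 𝕜 V} (hf : IsSelfAdjoint f) (hg : IsSelfAdjoint g) :
    star (LinearMap.trace 𝕜 V (f * g)) = LinearMap.trace 𝕜 V (f * g) := by
  rw [← trace_star, star_mul, hf.star_eq, hg.star_eq, LinearMap.trace_mul_comm]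

open scoped ComplexOrder

theorem trace_star_mul_self_pos {f : Module.End 𝕜 V} (hf : f ≠ 0) :
    0 < LinearMap.trace 𝕜 V (star f * f) := by
  set b := stdOrthonormalBasis 𝕜 V
  have htrace : LinearMap.trace 𝕜 V (star f * f) = ((∑ i, ‖f (b i)‖ ^ 2 : ℝ) : 𝕜) := by
    rw [LinearMap.trace_eq_sum_inner _ b]
    push_cast
    exact Finset.sum_congr rfl fun i _ => by
      rw [Module.End.mul_apply, LinearMap.star_eq_adjoint, LinearMap.adjoint_inner_right,
        inner_self_eq_norm_sq_to_K]
  obtain ⟨i, hi⟩ : ∃ i, f (b i) ≠ 0 := by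
    by_contra! h
    exact hf (b.toBasis.ext fun i => by simpa using h i)
  rw [htrace, RCLike.ofReal_pos]
  exact Finset.sum_pos' (fun _ _ => by positivity) ⟨i, Finset.mem_univ i, by positivity⟩

theorem trace_mul_mul_mul_pos {p q B : Module.End 𝕜 V} (hp : IsStarProjection p)
    (hq : IsStarProjection q) (hB : IsSelfAdjoint B) (h : p * B * q ≠ 0) :
    0 < LinearMap.trace 𝕜 V (p * B * q * B) := by
  have hpos := trace_star_mul_self_pos h
  rw [LinearMap.trace_mul_comm] at hpos
  convert hpos using 1
  calc LinearMap.trace 𝕜 V (p * B * q * B) = LinearMap.trace 𝕜 V (p * (p * B * q * B)) := by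
        simp only [← mul_assoc, hp.isIdempotentElem.eq]
    _ = LinearMap.trace 𝕜 V (p * B * (q * q) * B * p) := by
        rw [LinearMap.trace_mul_comm, hq.isIdempotentElem.eq]
    _ = LinearMap.trace 𝕜 V (p * B * q * star (p * B * q)) := by
        simp only [star_mul, hp.isSelfAdjoint.star_eq, hq.isSelfAdjoint.star_eq, hB.star_eq,
          mul_assoc]

end TraceStar

section LeonardSystem

variable {ι 𝕜 V : Type*} [Fintype ι] [RCLike 𝕜] [NormedAddCommGroup V] [InnerProductSpace 𝕜 V]
  [FiniteDimensional 𝕜 V]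

/-- A spectral resolution of the self-adjoint operator `B`: a complete family of nonzero
orthogonal projections `e i` with `B = ∑ i, θ i • e i`. The scalars `θ i` need not be distinct. -/
structure IsSpectralResolution (B : Module.End 𝕜 V) (e : ι → Module.End 𝕜 V) (θ : ι → ℝ) :
    Prop where
  complete : CompleteOrthogonalIdempotents e
  isSelfAdjoint_idem : ∀ i, IsSelfAdjoint (e i)
  ne_zero : ∀ i, e i ≠ 0
  eq_sum : B = ∑ i, (θ i : 𝕜) • e i

namespace IsSpectralResolution

variable {B : Module.End 𝕜 V} {e : ι → Module.End 𝕜 V} {θ : ι → ℝ}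

theorem isStarProjection (h : IsSpectralResolution B e θ) (i : ι) : IsStarProjection (e i) :=
  ⟨h.complete.idem i, h.isSelfAdjoint_idem i⟩

theorem isSelfAdjoint (h : IsSpectralResolution B e θ) : IsSelfAdjoint B := by
  rw [h.eq_sum]
  exact isSelfAdjoint_sum _ fun i _ =>
    IsSelfAdjoint.smul (RCLike.conj_ofReal (θ i)) (h.isSelfAdjoint_idem i)

theorem trace_eq_sum (h : IsSpectralResolution B e θ)
    (hcard : Fintype.card ι = Module.finrank 𝕜 V) :
    LinearMap.trace 𝕜 V B = ∑ i, (θ i : 𝕜) := by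
  simp only [h.eq_sum, map_sum, map_smul,
    trace_eq_one_of_card_eq_finrank h.complete h.ne_zero hcard, smul_eq_mul, mul_one]

theorem mem_invtSubmodule (h : IsSpectralResolution B e θ) {U : Submodule 𝕜 V}
    (hU : ∀ i, U ∈ (e i).invtSubmodule) : U ∈ B.invtSubmodule := by
  rw [Module.End.mem_invtSubmodule_iff_forall_mem_of_mem]
  intro v hv
  simp only [h.eq_sum, LinearMap.sum_apply, LinearMap.smul_apply]
  exact sum_mem fun i _ => U.smul_mem _ (hU i hv)

end IsSpectralResolution

/-- A Hermitian Leonard system of diameter `d`: self-adjoint operators `B` and `Bs` with rank-one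
spectral projections `e` and `es`, each acting tridiagonally on the eigenspaces of the other.
Irreducibility replaces the usual requirement that the entries next to the diagonal be nonzero. -/
structure IsLeonardSystem {d : ℕ} (B Bs : Module.End 𝕜 V) (e es : Fin (d + 1) → Module.End 𝕜 V)
    (θ θs : Fin (d + 1) → ℝ) : Prop where
  spectral : IsSpectralResolution B e θ
  dual_spectral : IsSpectralResolution Bs es θs
  finrank_eq : Module.finrank 𝕜 V = d + 1
  tridiagonal : ∀ i j : Fin (d + 1), (i : ℕ) + 1 < j ∨ (j : ℕ) + 1 < i → es i * B * es j = 0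
  dual_tridiagonal : ∀ i j : Fin (d + 1), (i : ℕ) + 1 < j ∨ (j : ℕ) + 1 < i → e i * Bs * e j = 0
  irreducible : ∀ U : Submodule 𝕜 V, U ∈ B.invtSubmodule → U ∈ Bs.invtSubmodule → U = ⊥ ∨ U = ⊤

namespace IsLeonardSystem

variable {d : ℕ} {B Bs : Module.End 𝕜 V} {e es : Fin (d + 1) → Module.End 𝕜 V}
  {θ θs : Fin (d + 1) → ℝ}

theorem dual (h : IsLeonardSystem B Bs e es θ θs) : IsLeonardSystem Bs B es e θs θ where
  spectral := h.dual_spectral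
  dual_spectral := h.spectral
  finrank_eq := h.finrank_eq
  tridiagonal := h.dual_tridiagonal
  dual_tridiagonal := h.tridiagonal
  irreducible U hBs hB := h.irreducible U hB hBs

theorem sum_trace_mul_eq_sum (h : IsLeonardSystem B Bs e es θ θs) :
    ∑ i, LinearMap.trace 𝕜 V (es i * B) = ∑ i, (θ i : 𝕜) := by
  rw [sum_trace_mul h.dual_spectral.complete,
    h.spectral.trace_eq_sum (by rw [Fintype.card_fin, h.finrank_eq])]

theorem star_trace_mul_eq (h : IsLeonardSystem B Bs e es θ θs) (i : Fin (d + 1)) :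
    star (LinearMap.trace 𝕜 V (es i * B)) = LinearMap.trace 𝕜 V (es i * B) :=
  star_trace_mul (h.dual_spectral.isSelfAdjoint_idem i) h.spectral.isSelfAdjoint

open scoped ComplexOrder in
theorem trace_succ_castSucc_pos (h : IsLeonardSystem B Bs e es θ θs) (i : Fin d) :
    0 < LinearMap.trace 𝕜 V (es i.succ * B * es i.castSucc * B) :=
  trace_mul_mul_mul_pos (h.dual_spectral.isStarProjection _) (h.dual_spectral.isStarProjection _)
    h.spectral.isSelfAdjoint <|
    succ_mul_mul_castSucc_ne_zero h.dual_spectral.complete h.dual_spectral.ne_zero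
      (fun U hB hes => h.irreducible U hB (h.dual_spectral.mem_invtSubmodule hes))
      (fun i j hij => h.tridiagonal i j (Or.inr hij)) i

end IsLeonardSystem

end LeonardSystem

section DiagonalSandwich

variable {n 𝕜 : Type*} [Fintype n] [DecidableEq n] [RCLike 𝕜]

-- The squared Frobenius norm of `P * diagonal u * Q` is the quadratic form of `P ⊙ Qᵀ` at `u`.
open scoped ComplexOrder in
theorem mul_diagonal_mul_eq_zero {P Q : Matrix n n 𝕜} (hP : IsStarProjection P)
    (hQ : IsStarProjection Q) {u : n → 𝕜} (h : (P ⊙ Qᵀ) *ᵥ u = 0) :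
    P * diagonal u * Q = 0 := by
  have hPs : Pᴴ = P := hP.isSelfAdjoint
  have hQs : Qᴴ = Q := hQ.isSelfAdjoint
  rw [← trace_conjTranspose_mul_self_eq_zero_iff]
  calc ((P * diagonal u * Q)ᴴ * (P * diagonal u * Q)).trace
      = (Q * (diagonal (star u) * (P * P) * diagonal u * Q)).trace := by
        simp only [conjTranspose_mul, diagonal_conjTranspose, hPs, hQs, Matrix.mul_assoc]
    _ = (diagonal (star u) * P * (diagonal u * (Q * Q))).trace := by
        rw [trace_mul_comm, hP.isIdempotentElem.eq]
        simp only [Matrix.mul_assoc]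
    _ = (diagonal (star u) * P * (Qᵀ * diagonal u)ᵀ).trace := by
        rw [hQ.isIdempotentElem.eq, transpose_mul, transpose_transpose, diagonal_transpose]
    _ = 0 := by
        rw [← dotProduct_vecMul_hadamard, ← dotProduct_mulVec, h, dotProduct_zero]

end DiagonalSandwich

namespace TSetup

variable (S : TSetup X)

theorem Estar_eq_diagonal (i : ℕ) :
    S.Estar i = diagonal fun y => if S.G.dist S.x y = i then 1 else 0 := by
  ext y z
  rw [diagonal_apply]
  by_cases hi : i ≤ S.D
  · rw [S.hEstar i hi, ite_and]
  · have hne : S.G.dist S.x y ≠ i := fun h => hi (h ▸ S.hDiamLe S.x y)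
    rw [S.hEstarzero i (not_le.mp hi), if_neg hne, ite_self, Matrix.zero_apply]

theorem isHermitian_Estar (i : ℕ) : (S.Estar i).IsHermitian := by
  rw [Estar_eq_diagonal]
  refine isHermitian_diagonal_iff.mpr fun y => ?_
  split_ifs
  exacts [.one _, .zero _]

theorem isHermitian_E (i : ℕ) : (S.E i).IsHermitian := by
  rw [IsHermitian, conjTranspose, S.hEsymm]
  exact S.hEreal i

theorem orthogonalIdempotents_Estar : OrthogonalIdempotents S.Estar := by
  refine OrthogonalIdempotents.iff_mul_eq.mpr fun i j => ?_
  ext y z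
  simp only [Estar_eq_diagonal, diagonal_mul_diagonal]
  split_ifs with hij
  · simp only [hij, mul_ite, mul_one, mul_zero]
    congr! 2
    split_ifs <;> rfl
  · by_cases hyz : y = z
    · subst hyz
      simp only [diagonal_apply_eq, Matrix.zero_apply]
      grind
    · rw [diagonal_apply_ne _ hyz, Matrix.zero_apply]

theorem orthogonalIdempotents_E : OrthogonalIdempotents S.E := by
  refine OrthogonalIdempotents.iff_mul_eq.mpr fun i j => ?_
  by_cases hi : i ≤ S.D
  · by_cases hj : j ≤ S.D
    · exact S.hEidem i j hi hj
    · rw [S.hEzero j (not_le.mp hj), if_neg (by rintro rfl; exact hj hi), mul_zero]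
  · rw [S.hEzero i (not_le.mp hi), zero_mul, ite_self]

theorem isStarProjection_E (i : ℕ) : IsStarProjection (S.E i) :=
  ⟨S.orthogonalIdempotents_E.idem i, S.isHermitian_E i⟩

theorem sum_Estar : ∑ i ∈ Finset.range (S.D + 1), S.Estar i = 1 := by
  ext y z
  have hy : S.G.dist S.x y ∈ Finset.range (S.D + 1) :=
    Finset.mem_range.mpr (Nat.lt_succ_of_le (S.hDiamLe _ _))
  simp only [Estar_eq_diagonal, Matrix.sum_apply, diagonal_apply, one_apply]
  split_ifs
  · rw [Finset.sum_ite_eq, if_pos hy]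
  · exact Finset.sum_const_zero

theorem A_mem_T : S.A ∈ S.T := Algebra.subset_adjoin (Set.mem_insert _ _)

theorem Astar_mem_T : S.Astar ∈ S.T :=
  Algebra.subset_adjoin (Set.mem_insert_of_mem _ (Set.mem_singleton _))

theorem E_mem_T (i : ℕ) : S.E i ∈ S.T := by
  have hθ : Set.InjOn (fun j => (S.θ j : ℂ)) (Finset.range (S.D + 1)) := fun j hj k hk h =>
    S.hθinj j k (Finset.mem_range_succ_iff.mp hj) (Finset.mem_range_succ_iff.mp hk)
      (Complex.ofReal_injective h)
  have hmem := mem_adjoin_sum_smul S.orthogonalIdempotents_E S.hEsum hθ i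
  rw [← S.hAspec] at hmem
  exact Algebra.adjoin_mono (Set.singleton_subset_iff.mpr (Set.mem_insert _ _)) hmem

theorem Estar_mem_T (i : ℕ) : S.Estar i ∈ S.T := by
  have hθstar : Set.InjOn (fun j => (S.θstar j : ℂ)) (Finset.range (S.D + 1)) := fun j hj k hk h =>
    S.hθstarinj j k (Finset.mem_range_succ_iff.mp hj) (Finset.mem_range_succ_iff.mp hk)
      (Complex.ofReal_injective h)
  have hmem := mem_adjoin_sum_smul S.orthogonalIdempotents_Estar S.sum_Estar hθstar i
  rw [← S.hAstarspec] at hmem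
  exact Algebra.adjoin_mono (Set.subset_insert _ _) hmem

theorem Estar_mul_A_mul_Estar {i j : ℕ} (h : i + 1 < j ∨ j + 1 < i) :
    S.Estar i * S.A * S.Estar j = 0 := by
  ext y z
  rw [Estar_eq_diagonal, Estar_eq_diagonal, mul_diagonal, diagonal_mul, S.hA, Matrix.zero_apply]
  split_ifs with hy hyz hz
  · have hxz := S.hGconn.dist_triangle (u := S.x) (v := y) (w := z)
    have hxy := S.hGconn.dist_triangle (u := S.x) (v := z) (w := y)
    rw [SimpleGraph.dist_eq_one_iff_adj.mpr hyz] at hxz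
    rw [SimpleGraph.dist_eq_one_iff_adj.mpr hyz.symm] at hxy
    omega
  all_goals simp only [mul_zero, zero_mul]

theorem Astar_eq_diagonal :
    S.Astar = diagonal ((Fintype.card X : ℂ) • S.E 1 *ᵥ Pi.single S.x 1) := by
  ext y z
  rw [S.hAstar, diagonal_apply, Pi.smul_apply, mulVec_single_one, col_apply,
    ← transpose_apply (S.E 1), S.hEsymm, smul_eq_mul]

theorem hadamard_E_mul_E {h i j : ℕ} (hh : h ≤ S.D) (hi : i ≤ S.D) (hj : j ≤ S.D) :
    (S.E i ⊙ S.E j) * S.E h = ((Fintype.card X : ℂ)⁻¹ * S.q h i j) • S.E h := by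
  rw [S.hKrein i j hi hj, smul_mul_assoc, mul_smul,
    sum_smul_mul S.orthogonalIdempotents_E _ (Finset.mem_range_succ_iff.mpr hh)]

theorem E_mul_Astar_mul_E {i j : ℕ} (h : i + 1 < j ∨ j + 1 < i) :
    S.E i * S.Astar * S.E j = 0 := by
  by_cases hi : i ≤ S.D
  swap
  · rw [S.hEzero i (not_le.mp hi), zero_mul, zero_mul]
  by_cases hj : j ≤ S.D
  swap
  · rw [S.hEzero j (not_le.mp hj), mul_zero]
  have hD : 1 ≤ S.D := le_trans (by norm_num) S.hD3
  have hq : S.q 1 i j = 0 := S.hQpoly0 1 i j hD hi hj (by omega)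
  rw [Astar_eq_diagonal]
  refine mul_diagonal_mul_eq_zero (S.isStarProjection_E i) (S.isStarProjection_E j) ?_
  rw [S.hEsymm, mulVec_smul, mulVec_mulVec, hadamard_E_mul_E S hD hi hj, hq, Complex.ofReal_zero,
    mul_zero, zero_smul, zero_mulVec, smul_zero]

end TSetup

namespace TMod

variable {S : TSetup X} (M : TMod S)

/-- A copy of `W` carrying the Hermitian inner product of `ℂ^X`; `W` itself, as a subspace of
`X → ℂ`, carries the supremum norm. -/
def Space : Type _ := M.W.comap (WithLp.linearEquiv 2 ℂ (X → ℂ)).toLinearMap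

instance : NormedAddCommGroup M.Space := Submodule.normedAddCommGroup _

instance : InnerProductSpace ℂ M.Space := Submodule.innerProductSpace _

/-- The identity map from `M.Space` to `W`. -/
def equivW : M.Space ≃ₗ[ℂ] M.W := (WithLp.linearEquiv 2 ℂ (X → ℂ)).ofSubmodule' M.W

instance : FiniteDimensional ℂ M.Space := Module.Finite.equiv M.equivW.symm

/-- The representation of the Terwilliger algebra on `W`. -/
def rep : S.T →ₐ[ℂ] Module.End ℂ M.Space :=
  (M.equivW.symm.conjAlgEquiv ℂ).toAlgHom.comp <|
    AlgHom.ofLinearMap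
      { toFun := fun B => B.1.mulVecLin.restrict (M.hWinv B.1 B.2)
        map_add' := fun B C => LinearMap.ext fun v => Subtype.ext (add_mulVec B.1 C.1 v.1)
        map_smul' := fun c B => LinearMap.ext fun v => Subtype.ext (smul_mulVec c B.1 v.1) }
      (LinearMap.ext fun v => Subtype.ext (one_mulVec v.1))
      fun B C => LinearMap.ext fun v => Subtype.ext (mulVec_mulVec v.1 B.1 C.1).symm

theorem isSelfAdjoint_rep {B : S.T} (hB : B.1.IsHermitian) : IsSelfAdjoint (M.rep B) :=
  (LinearMap.isSymmetric_iff_isSelfAdjoint _).mp fun u v =>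
    isSymmetric_toEuclideanLin_iff.mpr hB u.1 v.1

theorem trW_eq_trace_rep (B : S.T) : trW S M B = LinearMap.trace ℂ _ (M.rep B) := by
  have hact : actW S M B = M.equivW.conj (M.rep B) := by
    have hB : ∀ w ∈ M.W, B.1.mulVecLin w ∈ M.W := M.hWinv B.1 B.2
    rw [actW, dif_pos hB]
    rfl
  rw [trW, hact, LinearMap.trace_conj']

theorem map_range_rep (B : S.T) :
    (M.rep B).range.map (M.W.subtype ∘ₗ M.equivW.toLinearMap) = M.W.map B.1.mulVecLin := by
  rw [← LinearMap.range_comp]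
  have hcomp : (M.W.subtype ∘ₗ M.equivW.toLinearMap) ∘ₗ M.rep B =
      B.1.mulVecLin ∘ₗ M.W.subtype ∘ₗ M.equivW.toLinearMap := rfl
  rw [hcomp, LinearMap.range_comp, LinearMap.range_comp, LinearEquiv.range, Submodule.map_top,
    Submodule.range_subtype]

theorem injective_subtype_comp_equivW :
    Function.Injective (M.W.subtype ∘ₗ M.equivW.toLinearMap) :=
  M.W.injective_subtype.comp M.equivW.injective

theorem finrank_range_rep (B : S.T) :
    Module.finrank ℂ (M.rep B).range = Module.finrank ℂ (M.W.map B.1.mulVecLin) := by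
  rw [← map_range_rep]
  exact (Submodule.equivMapOfInjective _ M.injective_subtype_comp_equivW _).finrank_eq

theorem rep_eq_zero_iff (B : S.T) : M.rep B = 0 ↔ M.W.map B.1.mulVecLin = ⊥ := by
  rw [← LinearMap.range_eq_bot, ← map_range_rep,
    ← Submodule.map_bot (M.W.subtype ∘ₗ M.equivW.toLinearMap),
    (Submodule.map_injective_of_injective M.injective_subtype_comp_equivW).eq_iff]

theorem isSpectralResolution_rep {F : ℕ → Matrix X X ℂ} (hF : OrthogonalIdempotents F)
    (hherm : ∀ j, (F j).IsHermitian) (hmem : ∀ j, F j ∈ S.T) {s : Finset ℕ}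
    (hs : ∑ j ∈ s, F j = 1) {r : ℕ}
    (hr : ∀ j, M.W.map (F j).mulVecLin ≠ ⊥ ↔ r ≤ j ∧ j ≤ r + M.d) {B : Matrix X X ℂ}
    (hB : B ∈ S.T) {θ : ℕ → ℝ} (hBF : B = ∑ j ∈ s, (θ j : ℂ) • F j) :
    IsSpectralResolution (M.rep ⟨B, hB⟩)
      (fun i : Fin (M.d + 1) => M.rep ⟨F (r + i), hmem (r + i)⟩) fun i => θ (r + i) := by
  set f : ℕ → Module.End ℂ M.Space := fun j => M.rep ⟨F j, hmem j⟩ with hf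
  have hortho : OrthogonalIdempotents f := by
    have hFT : OrthogonalIdempotents fun j => (⟨F j, hmem j⟩ : S.T) :=
      (OrthogonalIdempotents.map_injective_iff S.T.val.toRingHom Subtype.val_injective).mp hF
    exact hFT.map M.rep.toRingHom
  have hsum : ∑ j ∈ s, f j = 1 := by
    rw [hf, ← map_sum, ← map_one M.rep]
    exact congrArg M.rep (Subtype.ext (by simpa using hs))
  have hsupp : ∀ j, f j ≠ 0 ↔ r ≤ j ∧ j ≤ r + M.d := fun j =>
    (M.rep_eq_zero_iff _).not.trans (hr j)
  have hzero : ∀ j ∉ s, f j = 0 := fun j => eq_zero_of_sum_eq_one_of_notMem hortho hsum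
  have hzero' : ∀ j, ¬(r ≤ j ∧ j ≤ r + M.d) → f j = 0 := fun j hj =>
    not_not.mp ((hsupp j).not.mpr hj)
  refine ⟨⟨hortho.embedding ⟨fun i : Fin (M.d + 1) => r + (i : ℕ), fun i j h =>
    Fin.ext (Nat.add_left_cancel h)⟩, ?_⟩, fun i => M.isSelfAdjoint_rep (hherm _),
    fun i => (hsupp _).mpr ⟨by omega, by omega⟩, ?_⟩
  · exact (sum_eq_sum_fin_add hzero hzero').symm.trans hsum
  · have hBf : M.rep ⟨B, hB⟩ = ∑ j ∈ s, (θ j : ℂ) • f j := by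
      simp only [hf, ← map_smul, ← map_sum]
      exact congrArg M.rep (Subtype.ext (by simpa using hBF))
    rw [hBf]
    exact sum_eq_sum_fin_add (fun j hj => by rw [hzero j hj, smul_zero])
      fun j hj => by rw [hzero' j hj, smul_zero]

theorem eq_bot_or_eq_top_of_mem_invtSubmodule {U : Submodule ℂ M.Space}
    (hA : U ∈ (M.rep ⟨S.A, S.A_mem_T⟩).invtSubmodule)
    (hAstar : U ∈ (M.rep ⟨S.Astar, S.Astar_mem_T⟩).invtSubmodule) : U = ⊥ ∨ U = ⊤ := by
  set ι := M.W.subtype ∘ₗ M.equivW.toLinearMap with hι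
  have hinv : ∀ B ∈ S.T, ∀ w ∈ U.map ι, B *ᵥ w ∈ U.map ι := fun B hB => by
    induction hB using Algebra.adjoin_induction with
    | mem B hB =>
      rintro _ ⟨u, hu, rfl⟩
      rcases hB with rfl | rfl
      exacts [⟨_, hA hu, rfl⟩, ⟨_, hAstar hu, rfl⟩]
    | algebraMap c =>
      intro w hw
      rw [Algebra.algebraMap_eq_smul_one, smul_mulVec, one_mulVec]
      exact Submodule.smul_mem _ c hw
    | add B C _ _ ihB ihC =>
      exact fun w hw => add_mulVec B C w ▸ add_mem (ihB w hw) (ihC w hw)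
    | mul B C _ _ ihB ihC =>
      exact fun w hw => mulVec_mulVec w B C ▸ ihB _ (ihC w hw)
  have hrange : M.W = (⊤ : Submodule ℂ M.Space).map ι := by
    rw [hι, Submodule.map_top, LinearMap.range_comp, LinearEquiv.range, Submodule.map_top,
      Submodule.range_subtype]
  have hinj := Submodule.map_injective_of_injective M.injective_subtype_comp_equivW
  exact (M.hWirr (U.map ι) (hrange ▸ Submodule.map_mono le_top) hinv).imp
    (fun h => hinj (h.trans (Submodule.map_bot ι).symm)) fun h => hinj (h.trans hrange)

/-- The action of the adjacency matrix `A` on `W`. -/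
def adj : Module.End ℂ M.Space := M.rep ⟨S.A, S.A_mem_T⟩

/-- The action of the dual adjacency matrix `A*` on `W`. -/
def dualAdj : Module.End ℂ M.Space := M.rep ⟨S.Astar, S.Astar_mem_T⟩

/-- The action on `W` of the primitive idempotent `E_{t+i}`. -/
def idem (i : Fin (M.d + 1)) : Module.End ℂ M.Space :=
  M.rep ⟨S.E (M.t + i), S.E_mem_T (M.t + i)⟩

/-- The action on `W` of the dual primitive idempotent `E*_{r+i}`. -/
def dualIdem (i : Fin (M.d + 1)) : Module.End ℂ M.Space :=
  M.rep ⟨S.Estar (M.r + i), S.Estar_mem_T (M.r + i)⟩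

theorem isSpectralResolution_adj :
    IsSpectralResolution M.adj M.idem fun i => S.θ (M.t + i) :=
  M.isSpectralResolution_rep S.orthogonalIdempotents_E S.isHermitian_E S.E_mem_T S.hEsum M.ht
    S.A_mem_T S.hAspec

theorem isSpectralResolution_dualAdj :
    IsSpectralResolution M.dualAdj M.dualIdem fun i => S.θstar (M.r + i) :=
  M.isSpectralResolution_rep S.orthogonalIdempotents_Estar S.isHermitian_Estar S.Estar_mem_T
    S.sum_Estar M.hr S.Astar_mem_T S.hAstarspec

theorem finrank_range_dualIdem (i : Fin (M.d + 1)) :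
    Module.finrank ℂ (M.dualIdem i).range = 1 := by
  refine le_antisymm ((M.finrank_range_rep _).trans_le (M.hthin _)) ?_
  exact Submodule.one_le_finrank_iff.mpr
    (LinearMap.range_eq_bot.not.mpr (M.isSpectralResolution_dualAdj.ne_zero i))

theorem dualIdem_mul_adj_mul_dualIdem {i j : Fin (M.d + 1)}
    (h : (i : ℕ) + 1 < j ∨ (j : ℕ) + 1 < i) : M.dualIdem i * M.adj * M.dualIdem j = 0 := by
  rw [dualIdem, adj, dualIdem, ← map_mul, ← map_mul, ← map_zero M.rep]
  exact congrArg M.rep (Subtype.ext (S.Estar_mul_A_mul_Estar (by omega)))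

theorem idem_mul_dualAdj_mul_idem {i j : Fin (M.d + 1)}
    (h : (i : ℕ) + 1 < j ∨ (j : ℕ) + 1 < i) : M.idem i * M.dualAdj * M.idem j = 0 := by
  rw [idem, dualAdj, idem, ← map_mul, ← map_mul, ← map_zero M.rep]
  exact congrArg M.rep (Subtype.ext (S.E_mul_Astar_mul_E (by omega)))

theorem isLeonardSystem :
    IsLeonardSystem M.adj M.dualAdj M.idem M.dualIdem (fun i => S.θ (M.t + i))
      fun i => S.θstar (M.r + i) where
  spectral := M.isSpectralResolution_adj
  dual_spectral := M.isSpectralResolution_dualAdj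
  finrank_eq := by
    rw [← sum_finrank_range M.isSpectralResolution_dualAdj.complete]
    simp only [finrank_range_dualIdem, Finset.sum_const, Finset.card_univ, Fintype.card_fin,
      smul_eq_mul, mul_one]
  tridiagonal _ _ := M.dualIdem_mul_adj_mul_dualIdem
  dual_tridiagonal _ _ := M.idem_mul_dualAdj_mul_idem
  irreducible _ := M.eq_bot_or_eq_top_of_mem_invtSubmodule

theorem aW_eq_trace (i : Fin (M.d + 1)) :
    aW S M i = LinearMap.trace ℂ _ (M.dualIdem i * M.adj) := by
  rw [dualIdem, adj, ← map_mul, ← trW_eq_trace_rep]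
  rfl

theorem astarW_eq_trace (i : Fin (M.d + 1)) :
    astarW S M i = LinearMap.trace ℂ _ (M.idem i * M.dualAdj) := by
  rw [idem, dualAdj, ← map_mul, ← trW_eq_trace_rep]
  rfl

theorem xW_succ_eq_trace (i : Fin M.d) : xW S M (i + 1) =
    LinearMap.trace ℂ _ (M.dualIdem i.succ * M.adj * M.dualIdem i.castSucc * M.adj) := by
  rw [dualIdem, adj, dualIdem, ← map_mul, ← map_mul, ← map_mul, ← trW_eq_trace_rep]
  rfl

theorem xstarW_succ_eq_trace (i : Fin M.d) : xstarW S M (i + 1) =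
    LinearMap.trace ℂ _ (M.idem i.succ * M.dualAdj * M.idem i.castSucc * M.dualAdj) := by
  rw [idem, dualAdj, idem, ← map_mul, ← map_mul, ← map_mul, ← trW_eq_trace_rep]
  rfl

end TMod

/-- (i) `Σ a_i(W) = Σ θ_{t+i}`; (ii) `Σ a*_i(W) = Σ θ*_{r+i}`; (iii) the `a_i(W), a*_i(W)`
are real; (iv) the `x_i(W)` are real and positive; (v) the `x*_i(W)` are real and positive. -/
theorem stmt5 (S : TSetup X) (M : TMod S) (hd : 0 < M.d) :
    (∑ i ∈ Finset.range (M.d + 1), aW S M i =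
      ∑ i ∈ Finset.range (M.d + 1), (S.θ (M.t + i) : ℂ)) ∧
    (∑ i ∈ Finset.range (M.d + 1), astarW S M i =
      ∑ i ∈ Finset.range (M.d + 1), (S.θstar (M.r + i) : ℂ)) ∧
    (∀ i ≤ M.d, (aW S M i).im = 0 ∧ (astarW S M i).im = 0) ∧
    (∀ i : ℕ, 1 ≤ i → i ≤ M.d → (xW S M i).im = 0 ∧ 0 < (xW S M i).re) ∧
    (∀ i : ℕ, 1 ≤ i → i ≤ M.d → (xstarW S M i).im = 0 ∧ 0 < (xstarW S M i).re) := by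
  have h := M.isLeonardSystem
  refine ⟨?_, ?_, fun i hi => ⟨?_, ?_⟩, fun i hi hid => ?_, fun i hi hid => ?_⟩
  · simp only [Finset.sum_range, M.aW_eq_trace]
    exact h.sum_trace_mul_eq_sum
  · simp only [Finset.sum_range, M.astarW_eq_trace]
    exact h.dual.sum_trace_mul_eq_sum
  · rw [← Complex.conj_eq_iff_im, M.aW_eq_trace ⟨i, Nat.lt_succ_of_le hi⟩]
    exact h.star_trace_mul_eq _
  · rw [← Complex.conj_eq_iff_im, M.astarW_eq_trace ⟨i, Nat.lt_succ_of_le hi⟩]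
    exact h.dual.star_trace_mul_eq _
  · obtain ⟨k, rfl⟩ := Nat.exists_eq_add_of_le' hi
    rw [M.xW_succ_eq_trace ⟨k, hid⟩]
    exact (Complex.pos_iff.mp (h.trace_succ_castSucc_pos _)).symm.imp_left Eq.symm
  · obtain ⟨k, rfl⟩ := Nat.exists_eq_add_of_le' hi
    rw [M.xstarW_succ_eq_trace ⟨k, hid⟩]
    exact (Complex.pos_iff.mp (h.dual.trace_succ_castSucc_pos _)).symm.imp_left Eq.symm
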